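/- Let Q be a nonempty dense linear order without endpoints and let a ∈ Q. Set A = {x ∈ Q : x < a} and B = {x ∈ Q : a < x}. Then there is no definable injection from A into B, there is no definable injection from B into A, and there is no definable surjection from B onto A. (Hence Q satisfies neither of the counting-of-cardinalities principles CC1 and CC2.) -/

import Mathlib

open FirstOrder FirstOrder.Language

attribute [local instance] FirstOrder.Language.orderStructure

/-- A subset of `Q^n` is definable if it is defined by a first-order formula in the
language of orders with finitely many parameters from `Q`. -/
def DLODefinable {Q : Type*} [LinearOrder Q] {n : ℕ} (s : Set (Fin n → Q)) : Prop :=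
  ∃ A : Set Q, A.Finite ∧ A.Definable Language.order s

/-- The graph of `f` restricted to `D₁`, as a subset of `Q^(n+m)`. -/
def graphOn {Q : Type*} {n m : ℕ} (D₁ : Set (Fin n → Q))
    (f : (Fin n → Q) → (Fin m → Q)) : Set (Fin (n + m) → Q) :=
  {z | ∃ x ∈ D₁, z = Fin.append x (f x)}

/-- A definable bijection from `D₁ ⊆ Q^n` onto `D₂ ⊆ Q^m`: a bijection from `D₁` onto `D₂`
whose graph is a definable subset of `Q^(n+m)`. -/
def DefBij {Q : Type*} [LinearOrder Q] {n m : ℕ} (D₁ : Set (Fin n → Q))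
    (D₂ : Set (Fin m → Q)) : Prop :=
  ∃ f : (Fin n → Q) → (Fin m → Q), Set.BijOn f D₁ D₂ ∧ DLODefinable (graphOn D₁ f)

/-- A definable injection from `D₁ ⊆ Q^n` into `D₂ ⊆ Q^m`. -/
def DefInj {Q : Type*} [LinearOrder Q] {n m : ℕ} (D₁ : Set (Fin n → Q))
    (D₂ : Set (Fin m → Q)) : Prop :=
  ∃ f : (Fin n → Q) → (Fin m → Q),
    Set.MapsTo f D₁ D₂ ∧ Set.InjOn f D₁ ∧ DLODefinable (graphOn D₁ f)

/-- A definable surjection from `D₁ ⊆ Q^n` onto `D₂ ⊆ Q^m`. -/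
def DefSurj {Q : Type*} [LinearOrder Q] {n m : ℕ} (D₁ : Set (Fin n → Q))
    (D₂ : Set (Fin m → Q)) : Prop :=
  ∃ f : (Fin n → Q) → (Fin m → Q),
    Set.MapsTo f D₁ D₂ ∧ Set.SurjOn f D₁ D₂ ∧ DLODefinable (graphOn D₁ f)

/-!
A dense linear order without endpoints forms an extension pair with itself, so by back-and-forth
any isomorphism between finite suborders preserves all first-order formulas. Suppose `f` is
definable over a finite set `A` and some coordinate `y` of `f x` lies neither in `A` nor among the
coordinates of `x`. Moving `y` slightly downwards, past no other element of `A`, `x` or `f x`, is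
such an isomorphism; it fixes `A` and `x` and changes `f x`, so it would put a second value at `x`
on the graph of `f`. Hence the coordinates of `f x` that are not coordinates of `x` belong to `A`,
and a definable map between sets whose points share no coordinates has finite image.
-/

section ExtensionPair

variable {L : Language} {M N α : Type*} [L.Structure M] [L.Structure N]

theorem toEmbedding_comp_inclusion {f g : M ≃ₚ[L] N} (hfg : f ≤ g) :
    g.toEmbedding ∘ Substructure.inclusion (PartialEquiv.dom_le_dom hfg) = f.toEmbedding :=
  congrArg DFunLike.coe (PartialEquiv.subtype_toEquiv_inclusion hfg)

theorem realize_toEmbedding_comp_iff_of_isQF {n : ℕ} {φ : L.BoundedFormula α n} (hφ : φ.IsQF)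
    (f : M ≃ₚ[L] N) (v : α → f.dom) (xs : Fin n → f.dom) :
    φ.Realize (f.toEmbedding ∘ v) (f.toEmbedding ∘ xs) ↔
      φ.Realize (f.dom.subtype ∘ v) (f.dom.subtype ∘ xs) :=
  (hφ.realize_embedding f.toEmbedding).trans (hφ.realize_embedding f.dom.subtype).symm

theorem realize_toEmbedding_comp_iff_of_isExtensionPair (hMN : L.IsExtensionPair M N)
    (hNM : L.IsExtensionPair N M) {n : ℕ} (φ : L.BoundedFormula α n) (f : L.FGEquiv M N)
    (v : α → f.1.dom) (xs : Fin n → f.1.dom) :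
    φ.Realize (f.1.toEmbedding ∘ v) (f.1.toEmbedding ∘ xs) ↔
      φ.Realize (f.1.dom.subtype ∘ v) (f.1.dom.subtype ∘ xs) := by
  induction φ generalizing f with
  | falsum => exact Iff.rfl
  | equal t₁ t₂ =>
    exact realize_toEmbedding_comp_iff_of_isQF (BoundedFormula.IsAtomic.equal t₁ t₂).isQF f.1 v xs
  | rel R ts =>
    exact realize_toEmbedding_comp_iff_of_isQF (BoundedFormula.IsAtomic.rel R ts).isQF f.1 v xs
  | imp φ ψ ihφ ihψ =>
    rw [BoundedFormula.realize_imp, BoundedFormula.realize_imp, ihφ, ihψ]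
  | all φ ih =>
    have realize_snoc_iff {g : L.FGEquiv M N} (hfg : f ≤ g) (x : g.1.dom) :
        φ.Realize (f.1.toEmbedding ∘ v) (Fin.snoc (f.1.toEmbedding ∘ xs) (g.1.toEmbedding x)) ↔
          φ.Realize (f.1.dom.subtype ∘ v) (Fin.snoc (f.1.dom.subtype ∘ xs) x) := by
      let ι := Substructure.inclusion (PartialEquiv.dom_le_dom hfg)
      have hemb : g.1.toEmbedding ∘ ι = f.1.toEmbedding := toEmbedding_comp_inclusion hfg
      have hsub : g.1.dom.subtype ∘ ι = f.1.dom.subtype := rfl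
      have := ih g (ι ∘ v) (Fin.snoc (ι ∘ xs) x)
      rwa [Fin.comp_snoc, Fin.comp_snoc, ← Function.comp_assoc, ← Function.comp_assoc,
        ← Function.comp_assoc, ← Function.comp_assoc, hemb, hsub] at this
    rw [BoundedFormula.realize_all, BoundedFormula.realize_all]
    constructor
    · intro h x
      obtain ⟨g, hx, hfg⟩ := hMN f x
      exact (realize_snoc_iff hfg ⟨x, hx⟩).1 (h _)
    · intro h y
      obtain ⟨g, hy, hfg⟩ := hNM.cod f y
      obtain ⟨x, hxy⟩ := g.1.toEquiv.surjective ⟨y, hy⟩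
      have hgx : g.1.toEmbedding x = y := congrArg Subtype.val hxy
      exact hgx ▸ (realize_snoc_iff hfg x).2 (h x)

theorem comp_mem_iff_of_isExtensionPair (hM : L.IsExtensionPair M M) {A : Set M}
    {s : Set (α → M)} (hs : A.Definable L s) (f : L.FGEquiv M M)
    (hfA : ∀ a ∈ A, ∃ ha : a ∈ f.1.dom, f.1.toEmbedding ⟨a, ha⟩ = a) (v : α → f.1.dom) :
    f.1.toEmbedding ∘ v ∈ s ↔ f.1.dom.subtype ∘ v ∈ s := by
  obtain ⟨φ, rfl⟩ := Set.definable_iff_exists_formula_sum.1 hs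
  choose hA hfix using hfA
  let c : A → f.1.dom := fun a => ⟨a, hA a a.2⟩
  have hc : f.1.toEmbedding ∘ c = (↑) := funext fun a => hfix a a.2
  have hc' : f.1.dom.subtype ∘ c = (↑) := rfl
  have := realize_toEmbedding_comp_iff_of_isExtensionPair hM hM φ f (Sum.elim c v) default
  rw [Sum.comp_elim, Sum.comp_elim, hc, hc'] at this
  simpa only [Set.mem_ofPred_eq, Formula.Realize, Subsingleton.elim _ default] using this

end ExtensionPair

theorem append_mem_graphOn {Q : Type*} {n m : ℕ} {D : Set (Fin n → Q)}
    {f : (Fin n → Q) → (Fin m → Q)} {x : Fin n → Q} {y : Fin m → Q} :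
    Fin.append x y ∈ graphOn D f ↔ x ∈ D ∧ y = f x := by
  constructor
  · rintro ⟨x', hx', h⟩
    have hpair : (x, y) = (x', f x') := (Fin.appendEquiv n m).injective h
    obtain ⟨rfl, hy⟩ := Prod.mk_inj.1 hpair
    exact ⟨hx', hy⟩
  · rintro ⟨hx, rfl⟩
    exact ⟨x, hx, rfl⟩

theorem comp_append {Q : Type*} {n m : ℕ} (g : Q → Q) (x : Fin n → Q) (y : Fin m → Q) :
    g ∘ Fin.append x y = Fin.append (g ∘ x) (g ∘ y) := by
  ext i
  induction i using Fin.addCases <;> simp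

instance orderedStructure_orderStructure {M : Type*} [LE M] :
    Language.order.OrderedStructure M where
  relMap_leSymb _ := Iff.rfl

theorem exists_lt_strictMonoOn_update {Q : Type*} [LinearOrder Q] [DenselyOrdered Q]
    [NoMinOrder Q] {S : Set Q} (hS : S.Finite) (y : Q) :
    ∃ m < y, StrictMonoOn (Function.update id y m) S := by
  obtain ⟨b, hb⟩ : BddAbove ((↑) ⁻¹' S : Set (Set.Iio y)) :=
    (hS.preimage Subtype.val_injective.injOn).bddAbove
  obtain ⟨⟨m, hmy⟩, hbm⟩ := exists_gt b
  have hSm (s : Q) (hs : s ∈ S) (hsy : s < y) : s < m :=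
    (hb (a := ⟨s, hsy⟩) hs).trans_lt hbm
  refine ⟨m, hmy, fun s hs t _ hst => ?_⟩
  rcases eq_or_ne s y with rfl | hsy
  · simpa [hst.ne'] using lt_trans hmy hst
  · rcases eq_or_ne t y with rfl | hty
    · simpa [hsy] using hSm s hs hst
    · simpa [hsy, hty] using hst

section DLO

variable {Q : Type*} [LinearOrder Q] [DenselyOrdered Q] [NoMinOrder Q] [NoMaxOrder Q]

theorem comp_mem_iff_of_strictMonoOn {α : Type*} {A S : Set Q} (hS : S.Finite) (hAS : A ⊆ S)
    {g : Q → Q} (hg : StrictMonoOn g S) (hgA : Set.EqOn g id A) {s : Set (α → Q)}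
    (hs : A.Definable Language.order s) {v : α → Q} (hv : ∀ i, v i ∈ S) :
    g ∘ v ∈ s ↔ v ∈ s := by
  rcases isEmpty_or_nonempty Q with _ | _
  · rw [Subsingleton.elim (g ∘ v) v]
  have hmem {x : Q} : x ∈ Substructure.closure Language.order S ↔ x ∈ S :=
    Substructure.mem_closure_iff_of_isRelational _ _ _
  -- Otherwise instance search finds `orderStructure`, not definitionally equal to this one.
  let _ : Language.order.Structure (Substructure.closure Language.order S) :=
    Substructure.inducedStructure
  let e : Substructure.closure Language.order S ↪o Q :=
    OrderEmbedding.ofStrictMono (fun x => g x) fun x y => hg (hmem.1 x.2) (hmem.1 y.2)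
  let e' : Substructure.closure Language.order S ↪[Language.order] Q :=
    StrongHomClass.toEmbedding e
  let f : Language.order.FGEquiv Q Q :=
    ⟨⟨_, e'.toHom.range, e'.equivRange⟩, Substructure.fg_closure hS⟩
  exact comp_mem_iff_of_isExtensionPair (dlo_isExtensionPair Q Q) hs f
    (fun a ha => ⟨hmem.2 (hAS ha), hgA ha⟩) fun i => ⟨v i, hmem.2 (hv i)⟩

theorem apply_mem_union_range_of_definable_graphOn {n m : ℕ} {D : Set (Fin n → Q)}
    {f : (Fin n → Q) → (Fin m → Q)} {A : Set Q} (hA : A.Finite)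
    (hf : A.Definable Language.order (graphOn D f)) {x : Fin n → Q} (hx : x ∈ D) (j : Fin m) :
    f x j ∈ A ∪ Set.range x := by
  by_contra hj
  let S := A ∪ Set.range x ∪ Set.range (f x)
  have hS : S.Finite := (hA.union (Set.finite_range x)).union (Set.finite_range (f x))
  obtain ⟨y, hy, hmono⟩ := exists_lt_strictMonoOn_update hS (f x j)
  let g := Function.update id (f x j) y
  have hg : Set.EqOn g id (A ∪ Set.range x) := fun c hc =>
    Function.update_of_ne (ne_of_mem_of_not_mem hc hj) _ _
  have hgx : g ∘ x = x := funext fun i => hg (.inr ⟨i, rfl⟩)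
  have hvS (i : Fin (n + m)) : Fin.append x (f x) i ∈ S := by
    induction i using Fin.addCases <;> simp [S]
  have hmem : g ∘ Fin.append x (f x) ∈ graphOn D f :=
    (comp_mem_iff_of_strictMonoOn hS (fun a ha => .inl (.inl ha)) hmono
      (hg.mono Set.subset_union_left) hf hvS).2 (append_mem_graphOn.2 ⟨hx, rfl⟩)
  rw [comp_append, hgx] at hmem
  have hgfx : g (f x j) = f x j := congrFun (append_mem_graphOn.1 hmem).2 j
  exact hy.ne ((Function.update_self _ _ _).symm.trans hgfx)

theorem finite_image_of_disjoint_range {n m : ℕ} {D : Set (Fin n → Q)}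
    {f : (Fin n → Q) → (Fin m → Q)} (hf : DLODefinable (graphOn D f))
    (hD : ∀ x ∈ D, Disjoint (Set.range x) (Set.range (f x))) : (f '' D).Finite := by
  obtain ⟨A, hA, hdef⟩ := hf
  refine (Set.Finite.pi' fun _ => hA).subset ?_
  rintro _ ⟨x, hx, rfl⟩ j
  exact (apply_mem_union_range_of_definable_graphOn hA hdef hx j).resolve_right fun hj =>
    Set.disjoint_left.1 (hD x hx) hj ⟨j, rfl⟩

variable {n m : ℕ} {D₁ : Set (Fin n → Q)} {D₂ : Set (Fin m → Q)}

theorem not_defInj_of_disjoint_range (hD₁ : D₁.Infinite)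
    (hD : ∀ x ∈ D₁, ∀ y ∈ D₂, Disjoint (Set.range x) (Set.range y)) : ¬ DefInj D₁ D₂ := by
  rintro ⟨f, hmaps, hinj, hf⟩
  exact hD₁ ((finite_image_of_disjoint_range hf fun x hx => hD x hx _ (hmaps hx)).of_finite_image
    hinj)

theorem not_defSurj_of_disjoint_range (hD₂ : D₂.Infinite)
    (hD : ∀ x ∈ D₁, ∀ y ∈ D₂, Disjoint (Set.range x) (Set.range y)) : ¬ DefSurj D₁ D₂ := by
  rintro ⟨f, hmaps, hsurj, hf⟩
  exact hD₂ ((finite_image_of_disjoint_range hf fun x hx => hD x hx _ (hmaps hx)).subset hsurj)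

theorem dlo_CC_fails_general (hD₁ : D₁.Infinite) (hD₂ : D₂.Infinite)
    (hD : ∀ x ∈ D₁, ∀ y ∈ D₂, Disjoint (Set.range x) (Set.range y)) :
    ¬ DefInj D₁ D₂ ∧ ¬ DefInj D₂ D₁ ∧ ¬ DefSurj D₂ D₁ :=
  have hD' : ∀ y ∈ D₂, ∀ x ∈ D₁, Disjoint (Set.range y) (Set.range x) :=
    fun y hy x hx => (hD x hx y hy).symm
  ⟨not_defInj_of_disjoint_range hD₁ hD, not_defInj_of_disjoint_range hD₂ hD',
    not_defSurj_of_disjoint_range hD₁ hD'⟩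

end DLO

/-- For `A = (-∞, a)` and `B = (a, ∞)` in a DLO without endpoints there is no definable
injection either way and no definable surjection from `B` onto `A`; in particular the
counting-of-cardinalities principles CC1 and CC2 fail. -/
theorem dlo_CC_fails {Q : Type*} [LinearOrder Q] [DenselyOrdered Q] [NoMinOrder Q]
    [NoMaxOrder Q] [Nonempty Q] (a : Q) :
    ¬ DefInj {x : Fin 1 → Q | x 0 < a} {x : Fin 1 → Q | a < x 0} ∧
    ¬ DefInj {x : Fin 1 → Q | a < x 0} {x : Fin 1 → Q | x 0 < a} ∧
    ¬ DefSurj {x : Fin 1 → Q | a < x 0} {x : Fin 1 → Q | x 0 < a} := by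
  have hrange (s : Set Q) : s ⊆ Set.range fun x : Fin 1 → Q => x 0 := fun q _ => ⟨fun _ => q, rfl⟩
  refine dlo_CC_fails_general ((Set.Iio_infinite a).preimage (hrange _))
    ((Set.Ioi_infinite a).preimage (hrange _)) fun x hx y hy => ?_
  rw [Set.range_unique, Set.range_unique, Set.disjoint_singleton]
  exact (lt_trans hx hy).ne
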